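/- arXiv:math/0101171 — 2 statements merged into one kernel-verified Lean document; each statement's English description precedes it below -/
import Mathlib

section
/- Assume a_1 = 0 (i.e. B(0) = 0). Then: (i) every symmetric polynomial function of the full family φ_0(z), …, φ_{n−1}(z) can be written as a polynomial in B(z) (and every symmetric rational function as a rational function of B(z)); (ii) every symmetric polynomial function of the reduced family φ_1(z), …, φ_{n−1}(z) can be written as a polynomial in z and B(z) (and every symmetric rational function as a rational function of z and B(z)). -/
/-!
Write `B = p / q` with `p = ∏ (a_j - w)` and `q = ∏ (1 - conj(a_j) w)`. Since one of the `a_j`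
vanishes, `deg q < deg p`, so the leading coefficient of `p - b q` does not involve `b`, and by
Vieta the elementary symmetric functions of its roots are affine in `b`. Removing the root `z`
divides the generating function `∏ (1 + φ_j t)` by `1 + z t`, which makes the elementary symmetric
functions of the remaining roots polynomials in `z` and `b`. The fundamental theorem of symmetric
polynomials passes from the elementary symmetric functions to all symmetric ones.
-/

open Complex Polynomial MeasureTheory Metric Set Filter Topology
open scoped Classical

noncomputable section

/-- The open unit disk in `ℂ`. -/
def uDisk : Set ℂ := Metric.ball 0 1

/-- The closed unit disk in `ℂ`. -/
def cDisk : Set ℂ := Metric.closedBall 0 1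

/-- The finite Blaschke product with zero set `a 0, …, a (n-1)`:
`B(z) = ∏_j (a_j - z)/(1 - conj(a_j)·z)`. -/
def blaschke {n : ℕ} (a : Fin n → ℂ) (z : ℂ) : ℂ :=
  ∏ j, (a j - z) / (1 - (starRingEnd ℂ) (a j) * z)

/-- The multiset of the `n` solutions (with multiplicity) `φ_0(z) = z, φ_1(z), …, φ_{n-1}(z)`
of `B(w) = B(z)`, realized as the roots of the polynomial equation
`∏_j (a_j - w) = B(z) · ∏_j (1 - conj(a_j)·w)`. -/
def fiberMS {n : ℕ} (a : Fin n → ℂ) (z : ℂ) : Multiset ℂ :=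
  ((∏ j, (Polynomial.C (a j) - Polynomial.X)) -
    Polynomial.C (blaschke a z) *
      ∏ j, (1 - Polynomial.C ((starRingEnd ℂ) (a j)) * Polynomial.X)).roots

/-- `𝒟(f)(z) = ∏_{j=1}^{n-1} (f(z) - f(φ_j(z)))`, where `φ_1(z), …, φ_{n-1}(z)` is the
fiber of `B` over `B(z)` with one copy of `z` removed.  In particular
`calD a id z = ∏_{j=1}^{n-1} (z - φ_j(z))`. -/
def calD {n : ℕ} (a : Fin n → ℂ) (f : ℂ → ℂ) (z : ℂ) : ℂ :=
  (((fiberMS a z).erase z).map (fun w => f z - f w)).prod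

/-- `G` is (the holomorphic extension after removing singularities of) `Γ(f) = 𝒟(f)/𝒟`. -/
def IsGamma {n : ℕ} (a : Fin n → ℂ) (f G : ℂ → ℂ) : Prop :=
  DifferentiableOn ℂ G uDisk ∧ ∀ z ∈ uDisk, G z * calD a id z = calD a f z

/-- `p`-th power integral mean of `f` on the circle of radius `r`. -/
def circMean (p : ℝ) (f : ℂ → ℂ) (r : ℝ) : ℝ :=
  ∫ θ in (0:ℝ)..(2 * Real.pi), ‖f ((r : ℂ) * Complex.exp ((θ : ℂ) * Complex.I))‖ ^ p

/-- The `H^p` norm of `f` (for `0 < p < ∞`). -/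
def hpNorm (p : ℝ) (f : ℂ → ℂ) : ℝ :=
  (sSup {m : ℝ | ∃ r ∈ Set.Ico (0:ℝ) 1, m = circMean p f r}) ^ (1 / p)

/-- Membership in the Hardy space `H^p`, `0 < p < ∞`: holomorphic on the disk with
uniformly bounded integral means. -/
def MemHp (p : ℝ) (f : ℂ → ℂ) : Prop :=
  DifferentiableOn ℂ f uDisk ∧ ∃ C : ℝ, ∀ r ∈ Set.Ico (0:ℝ) 1, circMean p f r ≤ C

/-- Membership in `H^∞`: bounded holomorphic functions on the disk. -/
def MemHinf (f : ℂ → ℂ) : Prop :=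
  DifferentiableOn ℂ f uDisk ∧ ∃ C : ℝ, ∀ z ∈ uDisk, ‖f z‖ ≤ C

/-- The `H^∞` (sup) norm. -/
def hinfNorm (f : ℂ → ℂ) : ℝ := sSup {m : ℝ | ∃ z ∈ uDisk, m = ‖f z‖}

/-- The algebra of all polynomials in the functions `F 0, …, F (m-1)`. -/
def algGen (m : ℕ) (F : Fin m → (ℂ → ℂ)) : Set (ℂ → ℂ) :=
  {h | ∃ P : MvPolynomial (Fin m) ℂ, ∀ z : ℂ, h z = MvPolynomial.eval (fun i => F i z) P}

/-- The algebra `ℂ[F,G]` of all polynomials in the two functions `F` and `G`. -/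
def algGen2 (F G : ℂ → ℂ) : Set (ℂ → ℂ) := algGen 2 ![F, G]

/-- The (sequential) closure of `S` in `H^p`. -/
def hpClosure (p : ℝ) (S : Set (ℂ → ℂ)) : Set (ℂ → ℂ) :=
  {f | MemHp p f ∧ ∃ u : ℕ → (ℂ → ℂ), (∀ k, u k ∈ S) ∧
    Filter.Tendsto (fun k => hpNorm p (fun z => f z - u k z)) Filter.atTop (nhds 0)}

/-- `S` has finite codimension in `H^p`: finitely many functions in `H^p` together with `S`
span all of `H^p`. -/
def FiniteCodimHp (p : ℝ) (S : Set (ℂ → ℂ)) : Prop :=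
  ∃ (k : ℕ) (e : Fin k → (ℂ → ℂ)), (∀ i, MemHp p (e i)) ∧
    ∀ f, MemHp p f → ∃ (c : Fin k → ℂ) (s : ℂ → ℂ), s ∈ S ∧
      ∀ z ∈ uDisk, f z = s z + ∑ i, c i * e i z

/-- Inner function: bounded by 1, holomorphic, radial limits of modulus 1 a.e. -/
def IsInner (f : ℂ → ℂ) : Prop :=
  DifferentiableOn ℂ f uDisk ∧ (∀ z ∈ uDisk, ‖f z‖ ≤ 1) ∧
  ∀ᵐ θ : ℝ ∂volume, ∃ l : ℂ, ‖l‖ = 1 ∧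
    Filter.Tendsto (fun r : ℝ => f ((r : ℂ) * Complex.exp ((θ : ℂ) * Complex.I)))
      (nhdsWithin 1 (Set.Iio 1)) (nhds l)

/-- `J` divides `h`, with a quotient holomorphic on the disk. -/
def InnerDivides (J h : ℂ → ℂ) : Prop :=
  ∃ k : ℂ → ℂ, DifferentiableOn ℂ k uDisk ∧ ∀ z ∈ uDisk, h z = J z * k z

/-- Outer function: a holomorphic function on the disk whose only inner divisors are
unimodular constants (i.e. whose inner part is a unimodular constant). -/
def IsOuter (h : ℂ → ℂ) : Prop :=
  DifferentiableOn ℂ h uDisk ∧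
  ∀ J : ℂ → ℂ, IsInner J → InnerDivides J h →
    ∃ c : ℂ, ‖c‖ = 1 ∧ ∀ z ∈ uDisk, J z = c

/-- `I` is the inner part of `h`: `I` is inner and `h = I·F` with `F` outer. -/
def IsInnerPartOf (I h : ℂ → ℂ) : Prop :=
  IsInner I ∧ ∃ F : ℂ → ℂ, IsOuter F ∧ ∀ z ∈ uDisk, h z = I z * F z

/-- Finite Blaschke product (up to a unimodular constant factor). -/
def IsFiniteBlaschke (f : ℂ → ℂ) : Prop :=
  ∃ (m : ℕ) (c : ℂ) (b : Fin m → ℂ), ‖c‖ = 1 ∧ (∀ i, b i ∈ uDisk) ∧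
    ∀ z ∈ uDisk, f z = c * ∏ i, (b i - z) / (1 - (starRingEnd ℂ) (b i) * z)

/-- `h` has no singular inner factor: every zero-free inner divisor of `h` is a
unimodular constant. -/
def NoSingularInnerFactor (h : ℂ → ℂ) : Prop :=
  ∀ J : ℂ → ℂ, IsInner J → (∀ z ∈ uDisk, J z ≠ 0) → InnerDivides J h →
    ∃ c : ℂ, ‖c‖ = 1 ∧ ∀ z ∈ uDisk, J z = c

section ElementarySymmetric

variable {R : Type*}

lemma multiset_esymm_cons_succ [CommSemiring R] (z : R) (s : Multiset R) (k : ℕ) :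
    (z ::ₘ s).esymm (k + 1) = s.esymm (k + 1) + z * s.esymm k := by
  simp [Multiset.esymm, Multiset.powersetCard_cons, Multiset.map_map, Multiset.sum_map_mul_left]

lemma multiset_esymm_erase [CommRing R] [DecidableEq R] {s : Multiset R} {z : R} (hz : z ∈ s)
    (k : ℕ) :
    (s.erase z).esymm k = ∑ i ∈ Finset.range (k + 1), (-z) ^ i * s.esymm (k - i) := by
  induction k with
  | zero => simp [Multiset.esymm]
  | succ k ih =>
    have split : s.esymm (k + 1) = (s.erase z).esymm (k + 1) + z * (s.erase z).esymm k := by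
      rw [← multiset_esymm_cons_succ, Multiset.cons_erase hz]
    rw [Finset.sum_range_succ', eq_sub_of_add_eq split.symm, ih]
    simp only [pow_succ', Nat.add_sub_add_right, mul_assoc, ← Finset.mul_sum]
    simp only [pow_zero, one_mul, Nat.sub_zero]
    ring

lemma exists_aeval_eq_of_isSymmetric {σ A S : Type*} [Fintype σ] [CommRing R] [CommSemiring A]
    [Algebra R A] [CommSemiring S] [Algebra R S] {P : MvPolynomial σ R} (hP : P.IsSymmetric)
    (e : ℕ → A) :
    ∃ Q : A, ∀ (f : A →ₐ[R] S) (w : σ → S),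
      (∀ k ≤ Fintype.card σ, (Finset.univ.val.map w).esymm k = f (e k)) →
        MvPolynomial.aeval w P = f Q := by
  obtain ⟨T, hT⟩ := MvPolynomial.esymmAlgHom_surjective R (le_refl (Fintype.card σ)) ⟨P, hP⟩
  refine ⟨MvPolynomial.aeval (fun i : Fin (Fintype.card σ) => e (i + 1)) T, fun f w hw => ?_⟩
  have eval_esymm (i : Fin (Fintype.card σ)) :
      MvPolynomial.aeval w (MvPolynomial.esymm σ R (i + 1)) = f (e (i + 1)) := by
    rw [MvPolynomial.aeval_esymm_eq_multiset_esymm, hw _ i.isLt]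
  calc MvPolynomial.aeval w P
      = MvPolynomial.aeval w (MvPolynomial.aeval
          (fun i : Fin (Fintype.card σ) => MvPolynomial.esymm σ R (i + 1)) T) := by
        rw [← MvPolynomial.esymmAlgHom_apply, hT]
    _ = MvPolynomial.aeval (fun i : Fin (Fintype.card σ) => f (e (i + 1))) T := by
        simp only [← AlgHom.comp_apply, MvPolynomial.comp_aeval, eval_esymm]
    _ = f (MvPolynomial.aeval (fun i : Fin (Fintype.card σ) => e (i + 1)) T) := by
        rw [← AlgHom.comp_apply, MvPolynomial.comp_aeval]

end ElementarySymmetric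

section Fiber

variable {K : Type*} [Field K]

lemma esymm_roots_of_card {p : K[X]} (hp : p ≠ 0) (hcard : Multiset.card p.roots = p.natDegree)
    {k : ℕ} (hk : k ≤ p.natDegree) :
    p.roots.esymm k = (-1) ^ k / p.leadingCoeff * p.coeff (p.natDegree - k) := by
  have hlead : p.leadingCoeff ≠ 0 := leadingCoeff_ne_zero.mpr hp
  rw [coeff_eq_esymm_roots_of_card hcard (Nat.sub_le _ _), Nat.sub_sub_self hk]
  field_simp
  rw [← pow_mul, pow_mul', neg_one_sq, one_pow, mul_one]

/-- The polynomial `p - b q`, whose roots are the solutions, with multiplicity, of `p / q = b` when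
`p` and `q` are coprime. -/
def fiberPoly (p q : K[X]) (b : K) : K[X] := p - C b * q

/-- The `k`-th elementary symmetric function of the roots of `p - b q`, as a polynomial in `b`;
meaningful for `deg q < deg p` and `k ≤ deg p`. -/
def fiberEsymm (p q : K[X]) (k : ℕ) : K[X] :=
  C ((-1) ^ k / p.leadingCoeff) *
    (C (p.coeff (p.natDegree - k)) - X * C (q.coeff (p.natDegree - k)))

variable {p q : K[X]}

lemma natDegree_C_mul_lt_of_natDegree_lt (hdeg : q.natDegree < p.natDegree) (b : K) :
    (C b * q).natDegree < p.natDegree :=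
  (natDegree_C_mul_le b q).trans_lt hdeg

lemma natDegree_fiberPoly (hdeg : q.natDegree < p.natDegree) (b : K) :
    (fiberPoly p q b).natDegree = p.natDegree :=
  natDegree_sub_eq_left_of_natDegree_lt (natDegree_C_mul_lt_of_natDegree_lt hdeg b)

lemma leadingCoeff_fiberPoly (hdeg : q.natDegree < p.natDegree) (b : K) :
    (fiberPoly p q b).leadingCoeff = p.leadingCoeff :=
  leadingCoeff_sub_of_degree_lt
    (degree_lt_degree (natDegree_C_mul_lt_of_natDegree_lt hdeg b))

lemma fiberPoly_ne_zero (hdeg : q.natDegree < p.natDegree) (b : K) : fiberPoly p q b ≠ 0 :=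
  ne_zero_of_natDegree_gt (hdeg.trans_eq (natDegree_fiberPoly hdeg b).symm)

lemma mem_roots_fiberPoly (hdeg : q.natDegree < p.natDegree) {b z : K} :
    z ∈ (fiberPoly p q b).roots ↔ p.eval z = b * q.eval z := by
  rw [mem_roots (fiberPoly_ne_zero hdeg b), IsRoot, fiberPoly, eval_sub, eval_C_mul, sub_eq_zero]

lemma esymm_roots_fiberPoly (hdeg : q.natDegree < p.natDegree) {b : K}
    (hcard : Multiset.card (fiberPoly p q b).roots = p.natDegree) {k : ℕ}
    (hk : k ≤ p.natDegree) :
    (fiberPoly p q b).roots.esymm k = (fiberEsymm p q k).eval b := by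
  have hnat := natDegree_fiberPoly hdeg b
  rw [esymm_roots_of_card (fiberPoly_ne_zero hdeg b) (hcard.trans hnat.symm)
    (hk.trans_eq hnat.symm), leadingCoeff_fiberPoly hdeg, hnat]
  simp only [fiberPoly, fiberEsymm, coeff_sub, coeff_C_mul, eval_mul, eval_sub, eval_C, eval_X]

lemma exists_eval_eq_eval_of_roots_fiberPoly (hdeg : q.natDegree < p.natDegree)
    {P : MvPolynomial (Fin p.natDegree) K} (hP : P.IsSymmetric) :
    ∃ Q : K[X], ∀ (b : K) (w : Fin p.natDegree → K),
      Finset.univ.val.map w = (fiberPoly p q b).roots → MvPolynomial.eval w P = Q.eval b := by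
  obtain ⟨Q, hQ⟩ := exists_aeval_eq_of_isSymmetric (S := K) hP (fiberEsymm p q)
  refine ⟨Q, fun b w hw => ?_⟩
  have hcard : Multiset.card (fiberPoly p q b).roots = p.natDegree := by simp [← hw]
  have esymm_eq (k : ℕ) (hk : k ≤ Fintype.card (Fin p.natDegree)) :
      (Finset.univ.val.map w).esymm k = Polynomial.aeval b (fiberEsymm p q k) := by
    rw [Fintype.card_fin] at hk
    rw [hw, esymm_roots_fiberPoly hdeg hcard hk, coe_aeval_eq_eval]
  simpa only [MvPolynomial.aeval_eq_eval, coe_aeval_eq_eval] using hQ (aeval b) w esymm_eq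

/-- The `k`-th elementary symmetric function of the roots of `p - b q` other than `z`, as a
polynomial in `z` (variable `0`) and `b` (variable `1`). -/
def reducedFiberEsymm (p q : K[X]) (k : ℕ) : MvPolynomial (Fin 2) K :=
  ∑ i ∈ Finset.range (k + 1),
    (-MvPolynomial.X 0) ^ i * aeval (MvPolynomial.X 1) (fiberEsymm p q (k - i))

lemma esymm_roots_fiberPoly_erase [DecidableEq K] (hdeg : q.natDegree < p.natDegree) {b z : K}
    (hcard : Multiset.card (fiberPoly p q b).roots = p.natDegree)
    (hz : z ∈ (fiberPoly p q b).roots) {k : ℕ} (hk : k ≤ p.natDegree) :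
    ((fiberPoly p q b).roots.erase z).esymm k =
      MvPolynomial.aeval ![z, b] (reducedFiberEsymm p q k) := by
  rw [multiset_esymm_erase hz, reducedFiberEsymm, map_sum]
  refine Finset.sum_congr rfl fun i _ => ?_
  rw [esymm_roots_fiberPoly hdeg hcard ((Nat.sub_le k i).trans hk), map_mul,
    ← aeval_algHom_apply]
  simp [coe_aeval_eq_eval]

lemma exists_eval_eq_eval_of_roots_fiberPoly_erase [DecidableEq K]
    (hdeg : q.natDegree < p.natDegree) {P : MvPolynomial (Fin (p.natDegree - 1)) K}
    (hP : P.IsSymmetric) :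
    ∃ Q : MvPolynomial (Fin 2) K, ∀ b, ∀ z ∈ (fiberPoly p q b).roots,
      ∀ w : Fin (p.natDegree - 1) → K, Finset.univ.val.map w = (fiberPoly p q b).roots.erase z →
        MvPolynomial.eval w P = MvPolynomial.eval ![z, b] Q := by
  obtain ⟨Q, hQ⟩ := exists_aeval_eq_of_isSymmetric (S := K) hP (reducedFiberEsymm p q)
  refine ⟨Q, fun b z hz w hw => ?_⟩
  have hcard : Multiset.card (fiberPoly p q b).roots = p.natDegree := by
    rw [← Multiset.card_erase_add_one hz, ← hw, Multiset.card_map, Finset.card_val,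
      Finset.card_univ, Fintype.card_fin, Nat.sub_add_cancel (Nat.one_le_of_lt hdeg)]
  have esymm_eq (k : ℕ) (hk : k ≤ Fintype.card (Fin (p.natDegree - 1))) :
      (Finset.univ.val.map w).esymm k =
        MvPolynomial.aeval ![z, b] (reducedFiberEsymm p q k) := by
    rw [Fintype.card_fin] at hk
    rw [hw, esymm_roots_fiberPoly_erase hdeg hcard hz (hk.trans (Nat.sub_le _ _))]
  simpa only [MvPolynomial.aeval_eq_eval] using hQ (MvPolynomial.aeval ![z, b]) w esymm_eq

end Fiber

section Blaschke

variable {n : ℕ} {a : Fin n → ℂ}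

/-- The numerator `∏ (a_j - w)` of the Blaschke product with zeros `a_j`. -/
def blaschkeNumer (a : Fin n → ℂ) : ℂ[X] := ∏ j, (C (a j) - X)

/-- The denominator `∏ (1 - conj(a_j) w)` of the Blaschke product with zeros `a_j`. -/
def blaschkeDenom (a : Fin n → ℂ) : ℂ[X] := ∏ j, (1 - C ((starRingEnd ℂ) (a j)) * X)

lemma natDegree_blaschkeNumer (a : Fin n → ℂ) : (blaschkeNumer a).natDegree = n := by
  have natDegree_factor (j : Fin n) : (C (a j) - X).natDegree = 1 := by
    rw [natDegree_sub, natDegree_X_sub_C]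
  have factor_ne_zero (j : Fin n) : C (a j) - X ≠ 0 :=
    ne_zero_of_natDegree_gt (natDegree_factor j ▸ one_pos)
  simp [blaschkeNumer, natDegree_prod _ _ fun j _ => factor_ne_zero j, natDegree_factor]

lemma natDegree_blaschkeDenom_lt {i : Fin n} (hi : a i = 0) : (blaschkeDenom a).natDegree < n :=
  calc (blaschkeDenom a).natDegree
      ≤ ∑ j, (1 - C ((starRingEnd ℂ) (a j)) * X : ℂ[X]).natDegree := natDegree_prod_le _ _
    _ < ∑ _j : Fin n, 1 := by
        refine Finset.sum_lt_sum (fun j _ => by compute_degree) ⟨i, Finset.mem_univ i, ?_⟩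
        simp [hi]
    _ = n := by simp

lemma one_sub_conj_mul_ne_zero {c z : ℂ} (hc : c ∈ uDisk) (hz : z ∈ uDisk) :
    1 - (starRingEnd ℂ) c * z ≠ 0 := by
  have hc : ‖c‖ < 1 := mem_ball_zero_iff.mp hc
  have hz : ‖z‖ < 1 := mem_ball_zero_iff.mp hz
  have norm_lt_one : ‖(starRingEnd ℂ) c * z‖ < 1 := by
    rw [norm_mul, RCLike.norm_conj]
    exact mul_lt_one_of_nonneg_of_lt_one_left (norm_nonneg c) hc hz.le
  intro h
  rw [← sub_eq_zero.mp h, norm_one] at norm_lt_one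
  exact lt_irrefl 1 norm_lt_one

lemma eval_blaschkeNumer {z : ℂ} (hz : ∀ j, 1 - (starRingEnd ℂ) (a j) * z ≠ 0) :
    (blaschkeNumer a).eval z = blaschke a z * (blaschkeDenom a).eval z := by
  simp only [blaschkeNumer, blaschkeDenom, blaschke, eval_prod, eval_sub, eval_mul, eval_C, eval_X,
    eval_one, ← Finset.prod_mul_distrib, div_mul_cancel₀ _ (hz _)]

end Blaschke

/-- `hB` says that `B = p / q` on `S`, in a form that leaves out the poles, where `p / q` would have
the junk value `0`. -/
theorem stmt1_general {K : Type*} [Field K] [DecidableEq K] {n : ℕ} {p q : K[X]}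
    (hp : p.natDegree = n) (hq : q.natDegree < n) {S : Set K} {B : K → K}
    (hB : ∀ z ∈ S, p.eval z = B z * q.eval z) :
    (∀ P : MvPolynomial (Fin n) K, P.IsSymmetric →
      ∃ Q : K[X], ∀ z ∈ S, ∀ w : Fin n → K,
        Finset.univ.val.map w = (fiberPoly p q (B z)).roots →
        MvPolynomial.eval w P = Q.eval (B z)) ∧
    (∀ P₁ P₂ : MvPolynomial (Fin n) K, P₁.IsSymmetric → P₂.IsSymmetric →
      ∃ Q₁ Q₂ : K[X], ∀ z ∈ S, ∀ w : Fin n → K,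
        Finset.univ.val.map w = (fiberPoly p q (B z)).roots →
        MvPolynomial.eval w P₁ * Q₂.eval (B z) = MvPolynomial.eval w P₂ * Q₁.eval (B z)) ∧
    (∀ P : MvPolynomial (Fin (n - 1)) K, P.IsSymmetric →
      ∃ Q : MvPolynomial (Fin 2) K, ∀ z ∈ S, ∀ w : Fin (n - 1) → K,
        Finset.univ.val.map w = (fiberPoly p q (B z)).roots.erase z →
        MvPolynomial.eval w P = MvPolynomial.eval ![z, B z] Q) ∧
    (∀ P₁ P₂ : MvPolynomial (Fin (n - 1)) K, P₁.IsSymmetric → P₂.IsSymmetric →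
      ∃ Q₁ Q₂ : MvPolynomial (Fin 2) K, ∀ z ∈ S, ∀ w : Fin (n - 1) → K,
        Finset.univ.val.map w = (fiberPoly p q (B z)).roots.erase z →
        MvPolynomial.eval w P₁ * MvPolynomial.eval ![z, B z] Q₂
          = MvPolynomial.eval w P₂ * MvPolynomial.eval ![z, B z] Q₁) := by
  subst hp
  refine ⟨fun P hP => ?_, fun P₁ P₂ h₁ h₂ => ?_, fun P hP => ?_, fun P₁ P₂ h₁ h₂ => ?_⟩
  · obtain ⟨Q, hQ⟩ := exists_eval_eq_eval_of_roots_fiberPoly hq hP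
    exact ⟨Q, fun z _ w hw => hQ (B z) w hw⟩
  · obtain ⟨Q₁, hQ₁⟩ := exists_eval_eq_eval_of_roots_fiberPoly hq h₁
    obtain ⟨Q₂, hQ₂⟩ := exists_eval_eq_eval_of_roots_fiberPoly hq h₂
    exact ⟨Q₁, Q₂, fun z _ w hw => by rw [hQ₁ _ w hw, hQ₂ _ w hw, mul_comm]⟩
  · obtain ⟨Q, hQ⟩ := exists_eval_eq_eval_of_roots_fiberPoly_erase hq hP
    exact ⟨Q, fun z hz w hw => hQ (B z) z ((mem_roots_fiberPoly hq).mpr (hB z hz)) w hw⟩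
  · obtain ⟨Q₁, hQ₁⟩ := exists_eval_eq_eval_of_roots_fiberPoly_erase hq h₁
    obtain ⟨Q₂, hQ₂⟩ := exists_eval_eq_eval_of_roots_fiberPoly_erase hq h₂
    refine ⟨Q₁, Q₂, fun z hz w hw => ?_⟩
    have hzroot := (mem_roots_fiberPoly hq).mpr (hB z hz)
    rw [hQ₁ _ z hzroot w hw, hQ₂ _ z hzroot w hw, mul_comm]

/-- (i) Every symmetric polynomial (resp. rational) function of the full
family `φ_0(z), …, φ_{n-1}(z)` is a polynomial (resp. rational function) in `B(z)`;
(ii) every symmetric polynomial (resp. rational) function of the reduced family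
`φ_1(z), …, φ_{n-1}(z)` is a polynomial (resp. rational function) in `z` and `B(z)`. -/
theorem stmt1 {n : ℕ} (hn : 2 ≤ n) (a : Fin n → ℂ) (ha : ∀ j, a j ∈ uDisk)
    (ha0 : a ⟨0, by omega⟩ = 0) :
    (∀ P : MvPolynomial (Fin n) ℂ, P.IsSymmetric →
      ∃ Q : Polynomial ℂ, ∀ z ∈ uDisk, ∀ w : Fin n → ℂ,
        Finset.univ.val.map w = fiberMS a z →
        MvPolynomial.eval w P = Q.eval (blaschke a z)) ∧
    (∀ P₁ P₂ : MvPolynomial (Fin n) ℂ, P₁.IsSymmetric → P₂.IsSymmetric →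
      ∃ Q₁ Q₂ : Polynomial ℂ, ∀ z ∈ uDisk, ∀ w : Fin n → ℂ,
        Finset.univ.val.map w = fiberMS a z →
        MvPolynomial.eval w P₁ * Q₂.eval (blaschke a z)
          = MvPolynomial.eval w P₂ * Q₁.eval (blaschke a z)) ∧
    (∀ P : MvPolynomial (Fin (n - 1)) ℂ, P.IsSymmetric →
      ∃ Q : MvPolynomial (Fin 2) ℂ, ∀ z ∈ uDisk, ∀ w : Fin (n - 1) → ℂ,
        Finset.univ.val.map w = (fiberMS a z).erase z →
        MvPolynomial.eval w P = MvPolynomial.eval ![z, blaschke a z] Q) ∧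
    (∀ P₁ P₂ : MvPolynomial (Fin (n - 1)) ℂ, P₁.IsSymmetric → P₂.IsSymmetric →
      ∃ Q₁ Q₂ : MvPolynomial (Fin 2) ℂ, ∀ z ∈ uDisk, ∀ w : Fin (n - 1) → ℂ,
        Finset.univ.val.map w = (fiberMS a z).erase z →
        MvPolynomial.eval w P₁ * MvPolynomial.eval ![z, blaschke a z] Q₂
          = MvPolynomial.eval w P₂ * MvPolynomial.eval ![z, blaschke a z] Q₁) :=
  stmt1_general (natDegree_blaschkeNumer a) (natDegree_blaschkeDenom_lt ha0)
    fun _ hz => eval_blaschkeNumer fun j => one_sub_conj_mul_ne_zero (ha j) hz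
end
end

section
/- Let f be holomorphic on 𝔻 and z ∈ 𝔻. Then Γ(f)(z) = 0 if and only if one of the following occurs: (i) there exists z′ ∈ 𝔻 with z′ ≠ z such that B(z′) = B(z) and f(z′) = f(z); or (ii) B′(z) = 0 and f′(z) = 0. -/
open Complex Polynomial MeasureTheory Metric Set Filter Topology
open scoped Classical

noncomputable section

/-!
Everything rests on the identity `Γ(f)(z) = ∏ dslope f z w`, where `w` runs over the fiber through
`z` with one copy of `z` removed: `dslope f z w` is the difference quotient of `f` for `w ≠ z` and
`f'(z)` for `w = z`. A factor with `w ≠ z` vanishes when `f w = f z`, and the factor `f'(z)` is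
present exactly when `z` is a multiple point of its fiber, that is, when `B'(z) = 0`.

Where `B'` does not vanish the identity is the definition of `Γ(f)`. Since `B` is not locally
constant, the zeros of `B'` are isolated, so it suffices that both sides are continuous. The right
side is, because `dslope f` is jointly continuous and the fiber moves continuously: its points stay
in the disk and are the roots of `∏ (a_j - X) - B(z) ∏ (1 - conj(a_j) X)`, whose leading coefficient
does not vanish since `‖B(z)‖ < 1`.
-/

section RootsContinuity

lemma exists_univ_val_map_eq_of_card_eq {α : Type*} {s : Multiset α} {m : ℕ} (hs : s.card = m) :
    ∃ v : Fin m → α, Finset.univ.val.map v = s := by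
  obtain ⟨l, rfl⟩ := Quot.exists_rep s
  subst hs
  exact ⟨l.get, (Fin.univ_val_map l.get).trans (congrArg _ (List.ofFn_get l))⟩

lemma multiset_eq_of_infinite_prod_sub_eq {R : Type*} [CommRing R] [IsDomain R]
    {s t : Multiset R}
    (h : {x | (s.map fun w => x - w).prod = (t.map fun w => x - w).prod}.Infinite) : s = t := by
  have hpoly : (s.map fun w => X - C w).prod = (t.map fun w => X - C w).prod := by
    refine eq_of_infinite_eval_eq _ _ ?_
    simpa [eval_multiset_prod, Multiset.map_map] using h
  rw [← roots_multiset_prod_X_sub_C s, hpoly, roots_multiset_prod_X_sub_C]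

lemma exists_tendsto_enumeration {ι X : Type*} [TopologicalSpace X] {K : Set X} (hK : IsCompact K)
    {U : Ultrafilter ι} {s : ι → Multiset X} {m : ℕ} (hsK : ∀ᶠ i in U, ∀ w ∈ s i, w ∈ K)
    (hcard : ∀ᶠ i in U, (s i).card = m) :
    ∃ (u : ι → Fin m → X) (v : Fin m → X),
      (∀ᶠ i in U, Finset.univ.val.map (u i) = s i) ∧ ∀ j, Tendsto (u · j) U (𝓝 (v j)) := by
  obtain ⟨u, hu⟩ := (hcard.mono fun i hi => exists_univ_val_map_eq_of_card_eq hi).choice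
  have huK : ∀ᶠ i in U, u i ∈ Set.univ.pi fun _ => K := by
    filter_upwards [hsK, hu] with i hiK hi j _
    exact hiK _ (hi ▸ Multiset.mem_map_of_mem _ (Finset.mem_univ j))
  obtain ⟨v, -, huv⟩ := (isCompact_univ_pi fun _ => hK).ultrafilter_le_nhds' (U.map u) huK
  exact ⟨u, v, hu, tendsto_pi_nhds.1 huv⟩

lemma tendsto_prod_map_of_tendsto_enumeration {ι X M : Type*} [TopologicalSpace X] [CommMonoid M]
    [TopologicalSpace M] [ContinuousMul M] {l : Filter ι} {s : ι → Multiset X} {m : ℕ}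
    {u : ι → Fin m → X} {v : Fin m → X} (hu : ∀ᶠ i in l, Finset.univ.val.map (u i) = s i)
    (huv : ∀ j, Tendsto (u · j) l (𝓝 (v j))) {g : ι → X → M} {g₀ : X → M}
    (hg : ∀ j, Tendsto (Function.uncurry g) (l ×ˢ 𝓝 (v j)) (𝓝 (g₀ (v j)))) :
    Tendsto (fun i => ((s i).map (g i)).prod) l
      (𝓝 ((Finset.univ.val.map v).map g₀).prod) := by
  have hlim : Tendsto (fun i => ∏ j, g i (u i j)) l (𝓝 (∏ j, g₀ (v j))) :=
    tendsto_finsetProd _ fun j _ => (hg j).comp (tendsto_id.prodMk (huv j))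
  rw [Multiset.map_map]
  refine hlim.congr' ?_
  filter_upwards [hu] with i hi
  rw [← hi, Multiset.map_map]
  rfl

/-- Continuity of roots, tested against functions: `hprod` says that the monic polynomials with
root multisets `s i` converge to the one with root multiset `t`. -/
lemma tendsto_prod_map_of_tendsto_prod_sub {ι R M : Type*} [CommRing R] [IsDomain R]
    [TopologicalSpace R] [IsTopologicalRing R] [T2Space R] [CommMonoid M] [TopologicalSpace M]
    [ContinuousMul M] {l : Filter ι} {s : ι → Multiset R} {t : Multiset R} {K S : Set R}
    (hK : IsCompact K) (hsK : ∀ᶠ i in l, ∀ w ∈ s i, w ∈ K)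
    (hcard : ∀ᶠ i in l, (s i).card = t.card) (hS : S.Infinite)
    (hprod : ∀ x ∈ S, Tendsto (fun i => ((s i).map fun w => x - w).prod) l
      (𝓝 (t.map fun w => x - w).prod))
    {g : ι → R → M} {g₀ : R → M}
    (hg : ∀ w ∈ t, Tendsto (Function.uncurry g) (l ×ˢ 𝓝 w) (𝓝 (g₀ w))) :
    Tendsto (fun i => ((s i).map (g i)).prod) l (𝓝 (t.map g₀).prod) := by
  refine (tendsto_iff_ultrafilter _ _ _).2 fun U hU => ?_
  obtain ⟨u, v, hu, huv⟩ := exists_tendsto_enumeration hK (hU hsK) (hU hcard)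
  have hvt : Finset.univ.val.map v = t := by
    refine multiset_eq_of_infinite_prod_sub_eq (hS.mono fun x hx => ?_)
    refine tendsto_nhds_unique ?_ ((hprod x hx).mono_left hU)
    exact tendsto_prod_map_of_tendsto_enumeration (g := fun _ w => x - w) hu huv fun j =>
      tendsto_snd.const_sub x
  have hmem (j) : v j ∈ t := hvt ▸ Multiset.mem_map_of_mem v (Finset.mem_univ j)
  exact hvt ▸ tendsto_prod_map_of_tendsto_enumeration hu huv fun j =>
    (hg (v j) (hmem j)).mono_left (prod_mono_left _ hU)

end RootsContinuity

section DividedDifferences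

variable {𝕜 E : Type*} [NontriviallyNormedField 𝕜] [NormedAddCommGroup E] [NormedSpace 𝕜 E]
  {f : 𝕜 → E} {z w : 𝕜}

lemma continuousAt_uncurry_dslope_of_ne (hz : ContinuousAt f z) (hw : ContinuousAt f w)
    (hne : w ≠ z) : ContinuousAt (Function.uncurry (dslope f)) (z, w) := by
  have hslope : ContinuousAt (fun p : 𝕜 × 𝕜 => (p.2 - p.1)⁻¹ • (f p.2 - f p.1)) (z, w) :=
    ((continuousAt_snd.sub continuousAt_fst).inv₀ (sub_ne_zero.2 hne)).smul
      ((ContinuousAt.comp' hw continuousAt_snd).sub (ContinuousAt.comp' hz continuousAt_fst))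
  refine hslope.congr ?_
  filter_upwards [(isOpen_ne_fun continuous_snd continuous_fst).mem_nhds hne] with p hp
  exact (dslope_of_ne f hp).symm

lemma continuousAt_uncurry_dslope_self (hf : HasStrictDerivAt f (deriv f z) z)
    (hderiv : ContinuousAt (deriv f) z) : ContinuousAt (Function.uncurry (dslope f)) (z, z) := by
  refine Metric.continuousAt_iff'.2 fun ε hε => ?_
  have hslope : ∀ᶠ p : 𝕜 × 𝕜 in 𝓝 (z, z),
      ‖f p.1 - f p.2 - (p.1 - p.2) • deriv f z‖ ≤ ε / 2 * ‖p.1 - p.2‖ :=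
    hf.isLittleO.def (half_pos hε)
  have hdiag : ∀ᶠ p : 𝕜 × 𝕜 in 𝓝 (z, z), dist (deriv f p.1) (deriv f z) < ε :=
    (continuous_fst.tendsto (z, z)).eventually (Metric.continuousAt_iff'.1 hderiv ε hε)
  filter_upwards [hslope, hdiag] with ⟨x, y⟩ hxy hx
  rw [Function.uncurry_apply_pair, Function.uncurry_apply_pair, dslope_same]
  rcases eq_or_ne y x with rfl | hne
  · rwa [dslope_same]
  have hpos : 0 < ‖x - y‖ := norm_pos_iff.2 (sub_ne_zero.2 hne.symm)
  have hfactor : (x - y) • (dslope f x y - deriv f z) = f x - f y - (x - y) • deriv f z := by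
    rw [smul_sub, ← neg_sub y x, neg_smul, sub_smul_dslope, neg_sub]
  rw [← hfactor, norm_smul, mul_comm (ε / 2)] at hxy
  rw [dist_eq_norm]
  exact (le_of_mul_le_mul_left hxy hpos).trans_lt (half_lt_self hε)

lemma continuousAt_uncurry_dslope [CompleteSpace E] (hz : AnalyticAt 𝕜 f z)
    (hw : AnalyticAt 𝕜 f w) : ContinuousAt (Function.uncurry (dslope f)) (z, w) := by
  rcases eq_or_ne w z with rfl | hne
  · exact continuousAt_uncurry_dslope_self hw.hasStrictDerivAt hw.deriv.continuousAt
  · exact continuousAt_uncurry_dslope_of_ne hz.continuousAt hw.continuousAt hne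

lemma dslope_eq_zero_iff_of_ne (hne : w ≠ z) : dslope f z w = 0 ↔ f w = f z := by
  rw [dslope_of_ne f hne, slope_def_module,
    smul_eq_zero_iff_right (inv_ne_zero (sub_ne_zero.2 hne)), sub_eq_zero]

end DividedDifferences

lemma eventually_eq_or_eventually_deriv_ne_zero {𝕜 E : Type*} [RCLike 𝕜] [NormedAddCommGroup E]
    [NormedSpace 𝕜 E] [CompleteSpace E] {f : 𝕜 → E} {z : 𝕜} (hf : AnalyticAt 𝕜 f z) :
    (∀ᶠ w in 𝓝 z, f w = f z) ∨ ∀ᶠ w in 𝓝[≠] z, deriv f w ≠ 0 := by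
  refine hf.deriv.eventually_eq_zero_or_eventually_ne_zero.imp_left fun hderiv => ?_
  obtain ⟨r, hr, hball⟩ := Metric.eventually_nhds_iff_ball.1 (hderiv.and hf.eventually_analyticAt)
  filter_upwards [Metric.ball_mem_nhds z hr] with w hw
  exact Metric.isOpen_ball.is_const_of_deriv_eq_zero (convex_ball z r).isPreconnected
    (fun x hx => (hball x hx).2.differentiableAt.differentiableWithinAt)
    (fun x hx => (hball x hx).1) hw (Metric.mem_ball_self hr)

section BlaschkeFactors

lemma mem_uDisk {z : ℂ} : z ∈ uDisk ↔ ‖z‖ < 1 := mem_ball_zero_iff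

lemma uDisk_mem_nhds {z : ℂ} (hz : z ∈ uDisk) : uDisk ∈ 𝓝 z := Metric.isOpen_ball.mem_nhds hz

variable {b w : ℂ}

lemma norm_one_sub_conj_mul_sq_sub_norm_sub_sq (b w : ℂ) :
    ‖1 - (starRingEnd ℂ) b * w‖ ^ 2 - ‖b - w‖ ^ 2 = (1 - ‖b‖ ^ 2) * (1 - ‖w‖ ^ 2) := by
  simp only [← normSq_eq_norm_sq, normSq_apply, sub_re, sub_im, one_re, one_im, mul_re, mul_im,
    conj_re, conj_im]
  ring

lemma norm_sub_lt_norm_one_sub_conj_mul (hb : ‖b‖ < 1) (hw : ‖w‖ < 1) :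
    ‖b - w‖ < ‖1 - (starRingEnd ℂ) b * w‖ := by
  have hb' : ‖b‖ ^ 2 < 1 := pow_lt_one₀ (norm_nonneg b) hb two_ne_zero
  have hw' : ‖w‖ ^ 2 < 1 := pow_lt_one₀ (norm_nonneg w) hw two_ne_zero
  refine lt_of_pow_lt_pow_left₀ 2 (norm_nonneg _) (sub_pos.1 ?_)
  rw [norm_one_sub_conj_mul_sq_sub_norm_sub_sq]
  exact mul_pos (sub_pos.2 hb') (sub_pos.2 hw')

lemma norm_one_sub_conj_mul_le_norm_sub (hb : ‖b‖ ≤ 1) (hw : 1 ≤ ‖w‖) :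
    ‖1 - (starRingEnd ℂ) b * w‖ ≤ ‖b - w‖ := by
  have hb' : ‖b‖ ^ 2 ≤ 1 := pow_le_one₀ (norm_nonneg b) hb
  have hw' : 1 ≤ ‖w‖ ^ 2 := one_le_pow₀ hw
  refine le_of_sq_le_sq (sub_nonpos.1 ?_) (norm_nonneg _)
  rw [norm_one_sub_conj_mul_sq_sub_norm_sub_sq]
  exact mul_nonpos_of_nonneg_of_nonpos (sub_nonneg.2 hb') (sub_nonpos.2 hw')

lemma one_sub_conj_mul_ne_zero_s3 (hb : ‖b‖ < 1) (hw : ‖w‖ < 1) : 1 - (starRingEnd ℂ) b * w ≠ 0 :=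
  norm_pos_iff.1 ((norm_nonneg _).trans_lt (norm_sub_lt_norm_one_sub_conj_mul hb hw))

end BlaschkeFactors

section BlaschkeProduct

variable {n : ℕ} {a : Fin n → ℂ} {z w : ℂ}

/-- The numerator `∏ (a_j - X)` of the Blaschke product with zeros `a`. -/
def blaschkeNum (a : Fin n → ℂ) : ℂ[X] := ∏ j, (C (a j) - X)

/-- The denominator `∏ (1 - conj(a_j) X)` of the Blaschke product with zeros `a`. -/
def blaschkeDen (a : Fin n → ℂ) : ℂ[X] := ∏ j, (1 - C ((starRingEnd ℂ) (a j)) * X)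

/-- The polynomial whose roots are the solutions of `B(w) = c`, with multiplicity; the fiber
through `z` is the case `c = B(z)`. -/
def levelPoly (a : Fin n → ℂ) (c : ℂ) : ℂ[X] := blaschkeNum a - C c * blaschkeDen a

lemma fiberMS_eq_roots_levelPoly (a : Fin n → ℂ) (z : ℂ) :
    fiberMS a z = (levelPoly a (blaschke a z)).roots := rfl

lemma eval_blaschkeNum (a : Fin n → ℂ) (w : ℂ) : (blaschkeNum a).eval w = ∏ j, (a j - w) := by
  simp [blaschkeNum, eval_prod]

lemma eval_blaschkeDen (a : Fin n → ℂ) (w : ℂ) :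
    (blaschkeDen a).eval w = ∏ j, (1 - (starRingEnd ℂ) (a j) * w) := by
  simp [blaschkeDen, eval_prod]

lemma eval_levelPoly (a : Fin n → ℂ) (c w : ℂ) :
    (levelPoly a c).eval w = (blaschkeNum a).eval w - c * (blaschkeDen a).eval w := by
  simp [levelPoly]

lemma blaschke_eq_eval_div_eval (a : Fin n → ℂ) :
    blaschke a = fun w => (blaschkeNum a).eval w / (blaschkeDen a).eval w := by
  funext w
  rw [eval_blaschkeNum, eval_blaschkeDen, blaschke, Finset.prod_div_distrib]

lemma eval_blaschkeDen_ne_zero (ha : ∀ j, a j ∈ uDisk) (hw : w ∈ uDisk) :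
    (blaschkeDen a).eval w ≠ 0 := by
  rw [eval_blaschkeDen]
  exact Finset.prod_ne_zero_iff.2 fun j _ =>
    one_sub_conj_mul_ne_zero_s3 (mem_uDisk.1 (ha j)) (mem_uDisk.1 hw)

lemma eval_blaschkeNum_ne_zero (ha : ∀ j, a j ∈ uDisk) (hw : w ∉ uDisk) :
    (blaschkeNum a).eval w ≠ 0 := by
  rw [eval_blaschkeNum]
  exact Finset.prod_ne_zero_iff.2 fun j _ => sub_ne_zero.2 fun h => hw (h ▸ ha j)

lemma norm_eval_blaschkeDen_le_norm_eval_blaschkeNum (ha : ∀ j, a j ∈ uDisk) (hw : w ∉ uDisk) :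
    ‖(blaschkeDen a).eval w‖ ≤ ‖(blaschkeNum a).eval w‖ := by
  rw [eval_blaschkeNum, eval_blaschkeDen, norm_prod, norm_prod]
  exact Finset.prod_le_prod (fun _ _ => norm_nonneg _) fun j _ =>
    norm_one_sub_conj_mul_le_norm_sub (mem_uDisk.1 (ha j)).le (not_lt.1 (mt mem_uDisk.2 hw))

lemma norm_blaschke_lt_one (hn : n ≠ 0) (ha : ∀ j, a j ∈ uDisk) (hw : w ∈ uDisk) :
    ‖blaschke a w‖ < 1 := by
  have hfactor (j) : ‖(a j - w) / (1 - (starRingEnd ℂ) (a j) * w)‖ < 1 := by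
    have hlt := norm_sub_lt_norm_one_sub_conj_mul (mem_uDisk.1 (ha j)) (mem_uDisk.1 hw)
    rw [norm_div]
    exact (div_lt_one ((norm_nonneg _).trans_lt hlt)).2 hlt
  let j₀ : Fin n := ⟨0, Nat.pos_of_ne_zero hn⟩
  rw [blaschke, norm_prod, ← Finset.mul_prod_erase _ _ (Finset.mem_univ j₀)]
  exact mul_lt_one_of_nonneg_of_lt_one_left (norm_nonneg _) (hfactor j₀)
    (Finset.prod_le_one (fun _ _ => norm_nonneg _) fun j _ => (hfactor j).le)

lemma analyticAt_blaschke (ha : ∀ j, a j ∈ uDisk) (hz : z ∈ uDisk) :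
    AnalyticAt ℂ (blaschke a) z := by
  rw [blaschke_eq_eval_div_eval]
  exact (AnalyticOnNhd.eval_polynomial _ z (mem_univ z)).fun_div
    (AnalyticOnNhd.eval_polynomial _ z (mem_univ z)) (eval_blaschkeDen_ne_zero ha hz)

lemma eval_derivative_levelPoly_blaschke (ha : ∀ j, a j ∈ uDisk) (hz : z ∈ uDisk) :
    (levelPoly a (blaschke a z)).derivative.eval z =
      (blaschkeDen a).eval z * deriv (blaschke a) z := by
  have hden := eval_blaschkeDen_ne_zero ha hz
  have hderiv := ((blaschkeNum a).hasDerivAt z).fun_div ((blaschkeDen a).hasDerivAt z) hden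
  rw [blaschke_eq_eval_div_eval, hderiv.deriv]
  simp only [levelPoly, derivative_sub, derivative_C_mul, eval_sub, eval_mul, eval_C]
  field_simp

end BlaschkeProduct

section Fibers

variable {n : ℕ} {a : Fin n → ℂ} {z w c : ℂ}

lemma natDegree_prod_le_card {ι R : Type*} [Fintype ι] [CommSemiring R] {p : ι → R[X]}
    (hp : ∀ i, (p i).natDegree ≤ 1) : (∏ i, p i).natDegree ≤ Fintype.card ι :=
  (natDegree_prod_le _ _).trans
    ((Finset.sum_le_sum fun i _ => hp i).trans_eq (Finset.card_eq_sum_ones _).symm)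

lemma natDegree_C_sub_X_le {R : Type*} [Ring R] (b : R) : (C b - X).natDegree ≤ 1 := by
  compute_degree

lemma natDegree_one_sub_C_mul_X_le {R : Type*} [Ring R] (b : R) :
    (1 - C b * X).natDegree ≤ 1 := by
  compute_degree

lemma coeff_blaschkeNum (a : Fin n → ℂ) : (blaschkeNum a).coeff n = (-1) ^ n := by
  have h := coeff_prod_of_natDegree_le Finset.univ (fun j => (C (a j) - X : ℂ[X])) 1
    fun j _ => natDegree_C_sub_X_le (a j)
  simpa [blaschkeNum, coeff_C] using h

lemma coeff_blaschkeDen (a : Fin n → ℂ) :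
    (blaschkeDen a).coeff n = ∏ j, -(starRingEnd ℂ) (a j) := by
  have h := coeff_prod_of_natDegree_le Finset.univ
    (fun j => (1 - C ((starRingEnd ℂ) (a j)) * X : ℂ[X])) 1
    fun j _ => natDegree_one_sub_C_mul_X_le _
  simpa [blaschkeDen, coeff_one] using h

lemma natDegree_levelPoly_le (a : Fin n → ℂ) (c : ℂ) : (levelPoly a c).natDegree ≤ n := by
  have hnum : (blaschkeNum a).natDegree ≤ Fintype.card (Fin n) :=
    natDegree_prod_le_card fun j => natDegree_C_sub_X_le (a j)
  have hden : (blaschkeDen a).natDegree ≤ Fintype.card (Fin n) :=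
    natDegree_prod_le_card fun j => natDegree_one_sub_C_mul_X_le _
  rw [Fintype.card_fin] at hnum hden
  exact (natDegree_sub_le _ _).trans (max_le hnum ((natDegree_C_mul_le _ _).trans hden))

lemma coeff_levelPoly_ne_zero (ha : ∀ j, a j ∈ uDisk) (hc : ‖c‖ < 1) :
    (levelPoly a c).coeff n ≠ 0 := by
  have hden : ‖(blaschkeDen a).coeff n‖ ≤ 1 := by
    rw [coeff_blaschkeDen, norm_prod]
    refine Finset.prod_le_one (fun _ _ => norm_nonneg _) fun j _ => ?_
    rw [norm_neg, RCLike.norm_conj]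
    exact (mem_uDisk.1 (ha j)).le
  have hlt : ‖c * (blaschkeDen a).coeff n‖ < 1 := by
    rw [norm_mul]
    exact mul_lt_one_of_nonneg_of_lt_one_left (norm_nonneg c) hc hden
  rw [levelPoly, coeff_sub, coeff_C_mul, coeff_blaschkeNum]
  refine sub_ne_zero.2 fun h => hlt.ne ?_
  rw [← h, norm_pow, norm_neg, norm_one, one_pow]

lemma natDegree_levelPoly (ha : ∀ j, a j ∈ uDisk) (hc : ‖c‖ < 1) :
    (levelPoly a c).natDegree = n :=
  natDegree_eq_of_le_of_coeff_ne_zero (natDegree_levelPoly_le a c) (coeff_levelPoly_ne_zero ha hc)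

lemma levelPoly_ne_zero (ha : ∀ j, a j ∈ uDisk) (hc : ‖c‖ < 1) : levelPoly a c ≠ 0 :=
  fun h => coeff_levelPoly_ne_zero ha hc (by rw [h, coeff_zero])

lemma eval_levelPoly_eq_prod_roots (ha : ∀ j, a j ∈ uDisk) (hc : ‖c‖ < 1) (x : ℂ) :
    (levelPoly a c).eval x =
      (levelPoly a c).coeff n * ((levelPoly a c).roots.map fun w => x - w).prod := by
  rw [(IsAlgClosed.splits _).eval_eq_prod_roots, leadingCoeff, natDegree_levelPoly ha hc]

lemma mem_roots_levelPoly (ha : ∀ j, a j ∈ uDisk) (hc : ‖c‖ < 1) :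
    w ∈ (levelPoly a c).roots ↔ w ∈ uDisk ∧ blaschke a w = c := by
  rw [mem_roots (levelPoly_ne_zero ha hc), IsRoot.def, eval_levelPoly, sub_eq_zero,
    blaschke_eq_eval_div_eval]
  have hdisk (h : (blaschkeNum a).eval w = c * (blaschkeDen a).eval w) : w ∈ uDisk := by
    by_contra hw
    have hpos : 0 < ‖(blaschkeNum a).eval w‖ := norm_pos_iff.2 (eval_blaschkeNum_ne_zero ha hw)
    have : ‖(blaschkeNum a).eval w‖ < ‖(blaschkeNum a).eval w‖ := calc
      ‖(blaschkeNum a).eval w‖ = ‖c‖ * ‖(blaschkeDen a).eval w‖ := by rw [h, norm_mul]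
      _ ≤ ‖c‖ * ‖(blaschkeNum a).eval w‖ := by
        gcongr
        exact norm_eval_blaschkeDen_le_norm_eval_blaschkeNum ha hw
      _ < ‖(blaschkeNum a).eval w‖ := mul_lt_of_lt_one_left hpos hc
    exact this.false
  refine ⟨fun h => ⟨hdisk h, ?_⟩, fun ⟨hw, h⟩ => ?_⟩
  · exact (div_eq_iff (eval_blaschkeDen_ne_zero ha (hdisk h))).2 h
  · exact (div_eq_iff (eval_blaschkeDen_ne_zero ha hw)).1 h

lemma card_fiberMS (hn : n ≠ 0) (ha : ∀ j, a j ∈ uDisk) (hz : z ∈ uDisk) :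
    (fiberMS a z).card = n := by
  rw [fiberMS_eq_roots_levelPoly, IsAlgClosed.card_roots_eq_natDegree,
    natDegree_levelPoly ha (norm_blaschke_lt_one hn ha hz)]

lemma mem_fiberMS (hn : n ≠ 0) (ha : ∀ j, a j ∈ uDisk) (hz : z ∈ uDisk) :
    w ∈ fiberMS a z ↔ w ∈ uDisk ∧ blaschke a w = blaschke a z :=
  mem_roots_levelPoly ha (norm_blaschke_lt_one hn ha hz)

lemma self_mem_fiberMS (hn : n ≠ 0) (ha : ∀ j, a j ∈ uDisk) (hz : z ∈ uDisk) :
    z ∈ fiberMS a z :=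
  (mem_fiberMS hn ha hz).2 ⟨hz, rfl⟩

lemma self_mem_erase_fiberMS_iff (hn : n ≠ 0) (ha : ∀ j, a j ∈ uDisk) (hz : z ∈ uDisk) :
    z ∈ (fiberMS a z).erase z ↔ deriv (blaschke a) z = 0 := by
  have hne := levelPoly_ne_zero ha (norm_blaschke_lt_one hn ha hz)
  have hroot : (levelPoly a (blaschke a z)).IsRoot z :=
    (mem_roots hne).1 (self_mem_fiberMS hn ha hz)
  rw [← Multiset.count_pos, Multiset.count_erase_self, fiberMS_eq_roots_levelPoly, count_roots,
    Nat.sub_pos_iff_lt, one_lt_rootMultiplicity_iff_isRoot hne, and_iff_right hroot, IsRoot.def,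
    eval_derivative_levelPoly_blaschke ha hz,
    mul_eq_zero_iff_left (eval_blaschkeDen_ne_zero ha hz)]

lemma eventually_deriv_blaschke_ne_zero (hn : n ≠ 0) (ha : ∀ j, a j ∈ uDisk) (hz : z ∈ uDisk) :
    ∀ᶠ ζ in 𝓝[≠] z, deriv (blaschke a) ζ ≠ 0 := by
  refine (eventually_eq_or_eventually_deriv_ne_zero (analyticAt_blaschke ha hz)).resolve_left
    fun hconst => ?_
  refine infinite_of_mem_nhds z (hconst.and (uDisk_mem_nhds hz)) ?_
  exact (fiberMS a z).toFinset.finite_toSet.subset fun w hw =>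
    Multiset.mem_toFinset.2 ((mem_fiberMS hn ha hz).2 hw.symm)

lemma tendsto_prod_sub_fiberMS (hn : n ≠ 0) (ha : ∀ j, a j ∈ uDisk) (hz : z ∈ uDisk) (x : ℂ) :
    Tendsto (fun ζ => ((fiberMS a ζ).map fun w => x - w).prod) (𝓝 z)
      (𝓝 ((fiberMS a z).map fun w => x - w).prod) := by
  have hdiv : ∀ ζ ∈ uDisk, (levelPoly a (blaschke a ζ)).eval x /
      (levelPoly a (blaschke a ζ)).coeff n = ((fiberMS a ζ).map fun w => x - w).prod := by
    intro ζ hζ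
    have hlt := norm_blaschke_lt_one hn ha hζ
    rw [eval_levelPoly_eq_prod_roots ha hlt,
      mul_div_cancel_left₀ _ (coeff_levelPoly_ne_zero ha hlt), fiberMS_eq_roots_levelPoly]
  have hB := (analyticAt_blaschke ha hz).continuousAt
  have hcont : ContinuousAt (fun ζ => (levelPoly a (blaschke a ζ)).eval x /
      (levelPoly a (blaschke a ζ)).coeff n) z := by
    refine ContinuousAt.div ?_ ?_ (coeff_levelPoly_ne_zero ha (norm_blaschke_lt_one hn ha hz))
    · simp only [eval_levelPoly]
      fun_prop
    · simp only [levelPoly, coeff_sub, coeff_C_mul]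
      fun_prop
  rw [← hdiv z hz]
  exact hcont.tendsto.congr' (eventually_of_mem (uDisk_mem_nhds hz) hdiv)

lemma tendsto_prod_sub_erase_fiberMS (hn : n ≠ 0) (ha : ∀ j, a j ∈ uDisk) (hz : z ∈ uDisk)
    {x : ℂ} (hx : x ≠ z) :
    Tendsto (fun ζ => (((fiberMS a ζ).erase ζ).map fun w => x - w).prod) (𝓝 z)
      (𝓝 (((fiberMS a z).erase z).map fun w => x - w).prod) := by
  have hdiv : ∀ ζ ∈ uDisk, x ≠ ζ → ((fiberMS a ζ).map fun w => x - w).prod / (x - ζ) =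
      (((fiberMS a ζ).erase ζ).map fun w => x - w).prod := by
    intro ζ hζ hxζ
    rw [← Multiset.prod_map_erase (self_mem_fiberMS hn ha hζ),
      mul_div_cancel_left₀ _ (sub_ne_zero.2 hxζ)]
  rw [← hdiv z hz hx]
  refine ((tendsto_prod_sub_fiberMS hn ha hz x).div (tendsto_id.const_sub x)
    (sub_ne_zero.2 hx)).congr' ?_
  filter_upwards [uDisk_mem_nhds hz, isOpen_ne.mem_nhds hx.symm] with ζ hζ hζx
  exact hdiv ζ hζ hζx.symm

end Fibers

section Gamma

variable {n : ℕ} {a : Fin n → ℂ} {f G : ℂ → ℂ} {z : ℂ}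

lemma calD_eq_calD_id_mul_prod_dslope (a : Fin n → ℂ) (f : ℂ → ℂ) (z : ℂ) :
    calD a f z = calD a id z * (((fiberMS a z).erase z).map (dslope f z)).prod := by
  simp only [calD, id_eq, ← Multiset.prod_map_mul]
  congr 2 with w
  rw [← neg_sub (f w), ← sub_smul_dslope, smul_eq_mul, ← neg_mul, neg_sub]

lemma calD_id_ne_zero (hn : n ≠ 0) (ha : ∀ j, a j ∈ uDisk) (hz : z ∈ uDisk)
    (hderiv : deriv (blaschke a) z ≠ 0) : calD a id z ≠ 0 := by
  refine Multiset.prod_ne_zero fun h => ?_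
  obtain ⟨w, hw, hzw⟩ := Multiset.mem_map.1 h
  obtain rfl : z = w := sub_eq_zero.1 hzw
  exact hderiv ((self_mem_erase_fiberMS_iff hn ha hz).1 hw)

lemma tendsto_prod_dslope_erase_fiberMS (hn : n ≠ 0) (ha : ∀ j, a j ∈ uDisk)
    (hf : DifferentiableOn ℂ f uDisk) (hz : z ∈ uDisk) :
    Tendsto (fun ζ => (((fiberMS a ζ).erase ζ).map (dslope f ζ)).prod) (𝓝 z)
      (𝓝 (((fiberMS a z).erase z).map (dslope f z)).prod) := by
  have hcard {ζ} (hζ : ζ ∈ uDisk) : ((fiberMS a ζ).erase ζ).card = n - 1 := by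
    rw [Multiset.card_erase_of_mem (self_mem_fiberMS hn ha hζ), card_fiberMS hn ha hζ,
      Nat.pred_eq_sub_one]
  have hdisk {ζ w} (hζ : ζ ∈ uDisk) (hw : w ∈ (fiberMS a ζ).erase ζ) : w ∈ uDisk :=
    ((mem_fiberMS hn ha hζ).1 (Multiset.mem_of_mem_erase hw)).1
  have hnhds := uDisk_mem_nhds hz
  refine tendsto_prod_map_of_tendsto_prod_sub (S := {z}ᶜ) (isCompact_closedBall (0 : ℂ) 1)
    ?_ ?_ (finite_singleton z).infinite_compl
    (fun x hx => tendsto_prod_sub_erase_fiberMS hn ha hz hx) fun w hw => ?_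
  · exact eventually_of_mem hnhds fun ζ hζ w hw => Metric.ball_subset_closedBall (hdisk hζ hw)
  · exact eventually_of_mem hnhds fun ζ hζ => by rw [hcard hζ, hcard hz]
  · rw [← nhds_prod_eq]
    exact continuousAt_uncurry_dslope (hf.analyticAt hnhds)
      (hf.analyticAt (uDisk_mem_nhds (hdisk hz hw)))

theorem IsGamma.eq_prod_dslope (hG : IsGamma a f G) (hn : n ≠ 0) (ha : ∀ j, a j ∈ uDisk)
    (hf : DifferentiableOn ℂ f uDisk) (hz : z ∈ uDisk) :
    G z = (((fiberMS a z).erase z).map (dslope f z)).prod := by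
  have hGz : Tendsto G (𝓝[≠] z) (𝓝 (G z)) :=
    (hG.1.differentiableAt (uDisk_mem_nhds hz)).continuousAt.tendsto.mono_left nhdsWithin_le_nhds
  refine tendsto_nhds_unique hGz (Tendsto.congr' ?_
    ((tendsto_prod_dslope_erase_fiberMS hn ha hf hz).mono_left nhdsWithin_le_nhds))
  filter_upwards [eventually_deriv_blaschke_ne_zero hn ha hz,
    nhdsWithin_le_nhds (uDisk_mem_nhds hz)] with ζ hderiv hζ
  refine mul_left_cancel₀ (calD_id_ne_zero hn ha hζ hderiv) ?_
  rw [← calD_eq_calD_id_mul_prod_dslope, mul_comm, hG.2 ζ hζ]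

end Gamma

theorem stmt3_general {n : ℕ} (hn : n ≠ 0) {a : Fin n → ℂ} (ha : ∀ j, a j ∈ uDisk)
    {f G : ℂ → ℂ} (hf : DifferentiableOn ℂ f uDisk) (hG : IsGamma a f G)
    {z : ℂ} (hz : z ∈ uDisk) :
    G z = 0 ↔
      (∃ z' ∈ uDisk, z' ≠ z ∧ blaschke a z' = blaschke a z ∧ f z' = f z) ∨
      (deriv (blaschke a) z = 0 ∧ deriv f z = 0) := by
  rw [hG.eq_prod_dslope hn ha hf hz, Multiset.prod_eq_zero_iff, Multiset.mem_map,
    ← self_mem_erase_fiberMS_iff hn ha hz]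
  constructor
  · rintro ⟨w, hw, hzero⟩
    rcases eq_or_ne w z with rfl | hne
    · exact Or.inr ⟨hw, by rwa [dslope_same] at hzero⟩
    · obtain ⟨hwD, hB⟩ := (mem_fiberMS hn ha hz).1 (Multiset.mem_of_mem_erase hw)
      exact Or.inl ⟨w, hwD, hne, hB, (dslope_eq_zero_iff_of_ne hne).1 hzero⟩
  · rintro (⟨w, hwD, hne, hB, hfw⟩ | ⟨hmult, hfz⟩)
    · exact ⟨w, (Multiset.mem_erase_of_ne hne).2 ((mem_fiberMS hn ha hz).2 ⟨hwD, hB⟩),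
        (dslope_eq_zero_iff_of_ne hne).2 hfw⟩
    · exact ⟨z, hmult, by rwa [dslope_same]⟩

/-- For `f` holomorphic on the disk and `z ∈ 𝔻`, `Γ(f)(z) = 0` if and
only if either there is `z' ≠ z` in the disk with `B(z') = B(z)` and `f(z') = f(z)`, or
`B'(z) = 0` and `f'(z) = 0`. -/
theorem stmt3 {n : ℕ} (hn : 2 ≤ n) (a : Fin n → ℂ) (ha : ∀ j, a j ∈ uDisk)
    (ha0 : a ⟨0, by omega⟩ = 0)
    (f G : ℂ → ℂ) (hf : DifferentiableOn ℂ f uDisk) (hG : IsGamma a f G)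
    (z : ℂ) (hz : z ∈ uDisk) :
    G z = 0 ↔
      (∃ z' ∈ uDisk, z' ≠ z ∧ blaschke a z' = blaschke a z ∧ f z' = f z) ∨
      (deriv (blaschke a) z = 0 ∧ deriv f z = 0) := by
  exact stmt3_general (by omega) ha hf hG hz
end
end
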